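/- arXiv:1010.5768 — 2 statements merged into one kernel-verified Lean document; each statement's English description precedes it below -/
import Mathlib

section
/- Let A = ⊕_{i∈ℕ} A_i and B = ⊕_{i∈ℕ} B_i be ℕ-graded commutative rings and φ : A → B a surjective graded ring homomorphism of degree 0 (i.e. φ(A_i) ⊆ B_i for all i). Then for every ideal I of B one has in_A(φ^{-1}(I)) = φ^{-1}(in_B(I)). -/
/-! The kernel of `φ` is homogeneous because `φ` commutes with taking components, and every
homogeneous element of `φ⁻¹(I)` is its own top-degree component; hence
`ker φ ⊆ in_A(φ⁻¹(I))`. By surjectivity it then suffices to compare images in `B`. The image of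
`in_A(f)` is either `0` or `in_B(φ f)`. Conversely, for `0 ≠ b ∈ I` of degree `d`, truncating any
lift of `b` above degree `d` gives a lift `a` of `b` of degree exactly `d`, and then
`φ(in_A(a)) = in_B(b)`. -/

/-- For an `ℕ`-graded ring `A` with grading `𝒜` and `f ∈ A`, `gradedInitial 𝒜 f` is the
top-degree homogeneous component `in_A(f)` of `f` (and `0` if `f = 0`). -/
noncomputable def gradedInitial {A : Type*} [CommRing A] (𝒜 : ℕ → AddSubgroup A)
    [GradedRing 𝒜] (f : A) : A :=
  letI : ∀ (i : ℕ) (x : 𝒜 i), Decidable (x ≠ 0) := fun _ _ => Classical.dec _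
  (DirectSum.decompose 𝒜 f ((DirectSum.decompose 𝒜 f).support.max.getD 0) : A)

/-- the initial ideal `in_A(I)` of an ideal of an `ℕ`-graded ring `A`, generated by the
top-degree components of the nonzero elements of `I`. -/
noncomputable def gradedInitialIdeal {A : Type*} [CommRing A] (𝒜 : ℕ → AddSubgroup A)
    [GradedRing 𝒜] (I : Ideal A) : Ideal A :=
  Ideal.span {g | ∃ f ∈ I, f ≠ 0 ∧ g = gradedInitial 𝒜 f}

section Components

variable {A B : Type*} [CommRing A] [CommRing B] (𝒜 : ℕ → AddSubgroup A)
  (ℬ : ℕ → AddSubgroup B) [GradedRing 𝒜] [GradedRing ℬ]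

theorem gradedInitial_eq_component (f : A) (d : ℕ)
    (hd : (DirectSum.decompose 𝒜 f d : A) ≠ 0)
    (hgt : ∀ i, d < i → (DirectSum.decompose 𝒜 f i : A) = 0) :
    gradedInitial 𝒜 f = DirectSum.decompose 𝒜 f d := by
  classical
  let : ∀ (i : ℕ) (x : 𝒜 i), Decidable (x ≠ 0) := fun _ _ => Classical.dec _
  have hmem : d ∈ (DirectSum.decompose 𝒜 f).support :=
    DFinsupp.mem_support_iff.mpr fun h => hd (by rw [h]; rfl)
  have hmax : (DirectSum.decompose 𝒜 f).support.max = (d : WithBot ℕ) := by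
    apply le_antisymm
    · refine Finset.max_le fun i hi => ?_
      by_contra hlt
      have hdi : d < i := WithBot.coe_lt_coe.mp (lt_of_not_ge hlt)
      exact DFinsupp.mem_support_iff.mp hi (Subtype.ext (hgt i hdi))
    · exact Finset.le_max hmem
  change (DirectSum.decompose 𝒜 f ((DirectSum.decompose 𝒜 f).support.max.getD 0) : A) = _
  rw [hmax]
  rfl

theorem exists_top_component (f : A) (hf : f ≠ 0) :
    ∃ d, (DirectSum.decompose 𝒜 f d : A) ≠ 0 ∧
      ∀ i, d < i → (DirectSum.decompose 𝒜 f i : A) = 0 := by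
  classical
  have hne : (DirectSum.decompose 𝒜 f).support.Nonempty := by
    rw [Finset.nonempty_iff_ne_empty]
    intro h
    rw [DFinsupp.support_eq_empty] at h
    exact hf ((DirectSum.decompose 𝒜).injective (h.trans (DirectSum.decompose_zero 𝒜).symm))
  refine ⟨_, fun h => DFinsupp.mem_support_iff.mp
    (Finset.max'_mem _ hne) (Subtype.ext h), fun i hi => ?_⟩
  by_contra h
  refine absurd (Finset.le_max' _ i (DFinsupp.mem_support_iff.mpr fun h0 => h ?_)) hi.not_ge
  rw [h0]; rfl

theorem map_component (φ : A →+* B) (hφ : ∀ i : ℕ, ∀ a ∈ 𝒜 i, φ a ∈ ℬ i) (f : A) (i : ℕ) :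
    φ (DirectSum.decompose 𝒜 f i) = DirectSum.decompose ℬ (φ f) i := by
  classical
  induction f using DirectSum.Decomposition.inductionOn 𝒜 with
  | zero => simp
  | @homogeneous j m =>
    by_cases h : j = i
    · subst h
      rw [DirectSum.decompose_of_mem_same 𝒜 m.2,
        DirectSum.decompose_of_mem_same ℬ (hφ _ _ m.2)]
    · rw [DirectSum.decompose_of_mem_ne 𝒜 m.2 h,
        DirectSum.decompose_of_mem_ne ℬ (hφ _ _ m.2) h, map_zero]
  | add a b ha hb =>
    simp only [DirectSum.decompose_add, DirectSum.add_apply, AddSubgroup.coe_add, map_add, ha, hb]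

/-- The components of `f` of degree greater than `d` can be discarded. -/
theorem exists_truncation (f : A) (d : ℕ) :
    ∃ g : A, (∀ i ≤ d, (DirectSum.decompose 𝒜 g i : A) = DirectSum.decompose 𝒜 f i) ∧
      ∀ i, d < i → (DirectSum.decompose 𝒜 g i : A) = 0 := by
  classical
  induction f using DirectSum.Decomposition.inductionOn 𝒜 with
  | zero => exact ⟨0, by simp⟩
  | @homogeneous j m =>
    by_cases h : j ≤ d
    · exact ⟨m, fun _ _ => rfl, fun i hi => DirectSum.decompose_of_mem_ne 𝒜 m.2 (by omega)⟩
    · refine ⟨0, fun i hi => ?_, by simp⟩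
      rw [DirectSum.decompose_of_mem_ne 𝒜 m.2 (by omega)]
      simp
  | add a b ha hb =>
    obtain ⟨g, hg, hg'⟩ := ha
    obtain ⟨k, hk, hk'⟩ := hb
    refine ⟨g + k, fun i hi => ?_, fun i hi => ?_⟩
    · simp only [DirectSum.decompose_add, DirectSum.add_apply, AddSubgroup.coe_add, hg i hi,
        hk i hi]
    · simp only [DirectSum.decompose_add, DirectSum.add_apply, AddSubgroup.coe_add, hg' i hi,
        hk' i hi, add_zero]

theorem ext_component {f g : A}
    (h : ∀ i, (DirectSum.decompose 𝒜 f i : A) = DirectSum.decompose 𝒜 g i) : f = g :=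
  (DirectSum.decompose 𝒜).injective (DFinsupp.ext fun i => Subtype.ext (h i))

theorem homogeneous_mem_gradedInitialIdeal (J : Ideal A) {i : ℕ} {x : A} (hx : x ∈ 𝒜 i)
    (hJ : x ∈ J) : x ∈ gradedInitialIdeal 𝒜 J := by
  by_cases h0 : x = 0
  · rw [h0]; exact zero_mem _
  have hs := DirectSum.decompose_of_mem_same 𝒜 hx
  refine Ideal.subset_span ⟨x, hJ, h0, ?_⟩
  rw [gradedInitial_eq_component 𝒜 x i (by rwa [hs]) fun j hj =>
    DirectSum.decompose_of_mem_ne 𝒜 hx hj.ne, hs]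

theorem ker_le_gradedInitialIdeal_comap (φ : A →+* B)
    (hφ : ∀ i : ℕ, ∀ a ∈ 𝒜 i, φ a ∈ ℬ i) (I : Ideal B) :
    RingHom.ker φ ≤ gradedInitialIdeal 𝒜 (I.comap φ) := by
  classical
  intro x hx
  rw [RingHom.mem_ker] at hx
  rw [← DirectSum.sum_support_decompose 𝒜 x]
  refine sum_mem fun i _ => homogeneous_mem_gradedInitialIdeal 𝒜 _ (SetLike.coe_mem _) ?_
  rw [Ideal.mem_comap, map_component 𝒜 ℬ φ hφ, hx]
  simp

end Components

/-- Lemma: `in_A(φ^{-1}(I)) = φ^{-1}(in_B(I))` for surjective `φ`. For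
`ℕ`-graded commutative rings `A`, `B`, a surjective graded ring homomorphism `φ : A → B` of
degree `0`, and an ideal `I ⊆ B`, the initial ideal of the contraction equals the
contraction of the initial ideal. -/
theorem gradedInitial_comap_eq_of_surjective {A B : Type*} [CommRing A] [CommRing B]
    (𝒜 : ℕ → AddSubgroup A) (ℬ : ℕ → AddSubgroup B) [GradedRing 𝒜] [GradedRing ℬ]
    (φ : A →+* B) (hφ : ∀ i : ℕ, ∀ a ∈ 𝒜 i, φ a ∈ ℬ i)
    (hsurj : Function.Surjective φ) (I : Ideal B) :
    gradedInitialIdeal 𝒜 (I.comap φ) = (gradedInitialIdeal ℬ I).comap φ := by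
  apply le_antisymm
  · refine Ideal.span_le.mpr ?_
    rintro _ ⟨f, hf, hf0, rfl⟩
    obtain ⟨d, hd, hgt⟩ := exists_top_component 𝒜 f hf0
    rw [gradedInitial_eq_component 𝒜 f d hd hgt, SetLike.mem_coe, Ideal.mem_comap,
      map_component 𝒜 ℬ φ hφ]
    -- Either the leading component dies in `B`, or it is the leading component of `φ f`.
    by_cases h0 : (DirectSum.decompose ℬ (φ f) d : B) = 0
    · rw [h0]; exact zero_mem _
    · refine Ideal.subset_span ⟨φ f, hf, fun h => h0 (by rw [h]; simp), ?_⟩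
      refine (gradedInitial_eq_component ℬ (φ f) d h0 fun i hi => ?_).symm
      rw [← map_component 𝒜 ℬ φ hφ, hgt i hi, map_zero]
  · have hmap : gradedInitialIdeal ℬ I ≤ (gradedInitialIdeal 𝒜 (I.comap φ)).map φ := by
      refine Ideal.span_le.mpr ?_
      rintro _ ⟨b, hb, hb0, rfl⟩
      obtain ⟨d, hd, hgt⟩ := exists_top_component ℬ b hb0
      obtain ⟨f, rfl⟩ := hsurj b
      obtain ⟨g, hg, hg'⟩ := exists_truncation 𝒜 f d
      have hφg : φ g = φ f := by
        refine ext_component ℬ fun i => ?_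
        rcases le_or_gt i d with hi | hi
        · rw [← map_component 𝒜 ℬ φ hφ, hg i hi, map_component 𝒜 ℬ φ hφ]
        · rw [← map_component 𝒜 ℬ φ hφ, hg' i hi, map_zero, hgt i hi]
      have hgd : (DirectSum.decompose 𝒜 g d : A) ≠ 0 := fun h => hd (by
        rw [← hφg, ← map_component 𝒜 ℬ φ hφ, h, map_zero])
      rw [gradedInitial_eq_component ℬ _ d hd hgt, ← hφg, ← map_component 𝒜 ℬ φ hφ,
        ← gradedInitial_eq_component 𝒜 g d hgd hg']
      refine Ideal.mem_map_of_mem φ (Ideal.subset_span ⟨g, ?_, fun h => hgd (by rw [h]; simp), rfl⟩)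
      rw [Ideal.mem_comap, hφg]
      exact hb
    intro x hx
    obtain ⟨y, hy, hyx⟩ := (Ideal.mem_map_iff_of_surjective φ hsurj).mp (hmap hx)
    have hk : x - y ∈ RingHom.ker φ := by rw [RingHom.mem_ker, map_sub, hyx, sub_self]
    simpa using add_mem (ker_le_gradedInitialIdeal_comap 𝒜 ℬ φ hφ I hk) hy
end

section
/- Let K be a field and S = K[y_1,…,y_s] a ℤ^d-graded polynomial ring with deg(y_i) = v_i ∈ ℤ^d, where V = (v_1,…,v_s) is a d×s integer matrix. Let H be a finitely generated subsemigroup of ℕV = {V·a : a ∈ ℕ^s}. Suppose there exist indices 1 ≤ i_1 < … < i_t ≤ s such that {v_1,…,v_s} = {v_{i_1},…,v_{i_t}} as sets and v_{i_1},…,v_{i_t} are linearly independent. Then the subring S^{(H)} = ⊕_{v∈H} S_v is Noetherian; equivalently, the semigroup {a ∈ ℕ^s : V·a ∈ H} is finitely generated. -/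
/-!
Grouping the variables by their column (`c j` is the index of the independent column equal to
column `j`) turns `V·a` into `∑ k, (classSum c a k) • v_{i_k}`, so by linear independence `V·a` and
the vector of class sums of `a` determine each other (`classSum_eq_of_VdotN_eq`). Let `T` be a finite
generating set of `H`. The set of exponent vectors `b` with `V·b ∈ T` is finite, since the class
sums bound the entries of `b`. It generates `{a | V·a ∈ H}`: if `V·a = x + y` with `x ∈ T` and
`y ∈ H`, both in `ℕV`, then the class sums of `a` split accordingly, and `a` itself splits as
`b + a'` with `V·b = x` and `V·a' = y` (`exists_le_classSum_eq`); induction on `H` concludes.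
-/

/-- `V ⋅ a ∈ ℤ^d` for an exponent vector `a ∈ ℕ^s`. -/
def VdotN {d s : ℕ} (V : Matrix (Fin d) (Fin s) ℤ) (a : Fin s → ℕ) : Fin d → ℤ :=
  V.mulVec fun j => (a j : ℤ)

/-- The semigroup `H̃ = {a ∈ ℕ^s : V·a ∈ H}`, whose finite generation is equivalent to the
Noetherianity of the subring `S^{(H)} = ⊕_{v ∈ H} S_v` of the `ℤ^d`-graded polynomial ring
`S = K[y_1,…,y_s]` with `deg(y_i)` the `i`-th column of `V`. -/
def fiberSubmonoid {d s : ℕ} (V : Matrix (Fin d) (Fin s) ℤ) (H : AddSubmonoid (Fin d → ℤ)) :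
    AddSubmonoid (Fin s → ℕ) where
  carrier := {a | VdotN V a ∈ H}
  zero_mem' := by
    have h0 : VdotN V (0 : Fin s → ℕ) = 0 := by
      have : (fun j => ((0 : Fin s → ℕ) j : ℤ)) = (0 : Fin s → ℤ) := by funext j; simp
      rw [VdotN, this, Matrix.mulVec_zero]
    simp only [Set.mem_setOf_eq, h0]
    exact H.zero_mem
  add_mem' := by
    intro a b ha hb
    have h : VdotN V (a + b) = VdotN V a + VdotN V b := by
      have : (fun j => ((a + b) j : ℤ)) = (fun j => (a j : ℤ)) + fun j => (b j : ℤ) := by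
        funext j; simp
      simp only [VdotN, this, Matrix.mulVec_add]
    simp only [Set.mem_setOf_eq, h]
    exact H.add_mem ha hb

/-- The total exponent that `a` gives to each class of variables, where `c j` is the class of the
variable `j`. -/
def classSum {s t : ℕ} (c : Fin s → Fin t) (a : Fin s → ℕ) (k : Fin t) : ℕ :=
  ∑ j with c j = k, a j

theorem classSum_add {s t : ℕ} (c : Fin s → Fin t) (a b : Fin s → ℕ) :
    classSum c (a + b) = classSum c a + classSum c b := by
  funext k
  simp [classSum, Finset.sum_add_distrib]

theorem le_classSum {s t : ℕ} (c : Fin s → Fin t) (a : Fin s → ℕ) (j : Fin s) :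
    a j ≤ classSum c a (c j) :=
  Finset.single_le_sum (f := a) (fun _ _ => Nat.zero_le _) (by simp)

theorem exists_le_sum_eq {ι : Type*} (a : ι → ℕ) (S : Finset ι) (n : ℕ) (hn : n ≤ ∑ j ∈ S, a j) :
    ∃ b : ι → ℕ, b ≤ a ∧ ∑ j ∈ S, b j = n := by
  classical
  induction S using Finset.induction_on generalizing n with
  | empty => exact ⟨0, fun _ => Nat.zero_le _, by simp at hn; simp [hn]⟩
  | insert i S hi ih =>
    rw [Finset.sum_insert hi] at hn
    -- Place as much of `n` as possible on `i` and the rest on `S`.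
    obtain ⟨b, hb, hsum⟩ := ih (n - min n (a i)) (by omega)
    refine ⟨Function.update b i (min n (a i)), ?_, ?_⟩
    · intro j
      by_cases h : j = i
      · subst h; simp
      · simpa [h] using hb j
    · rw [Finset.sum_insert hi, Finset.sum_update_of_notMem hi, hsum]
      simp

/-- Any vector of class sums below that of `a` is attained by some `b ≤ a`: the entries of
different classes can be chosen independently. -/
theorem exists_le_classSum_eq {s t : ℕ} (c : Fin s → Fin t) (a : Fin s → ℕ) (n : Fin t → ℕ)
    (hn : n ≤ classSum c a) : ∃ b : Fin s → ℕ, b ≤ a ∧ classSum c b = n := by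
  choose b hb hsum using fun k => exists_le_sum_eq a _ (n k) (hn k)
  refine ⟨fun j => b (c j) j, fun j => hb _ j, ?_⟩
  funext k
  rw [← hsum k, classSum]
  refine Finset.sum_congr rfl fun j hj => ?_
  rw [(Finset.mem_filter.mp hj).2]

theorem VdotN_eq_sum_classSum {d s t : ℕ} (V : Matrix (Fin d) (Fin s) ℤ) (e : Fin t → Fin s)
    (c : Fin s → Fin t) (hc : ∀ j, (fun i => V i j) = fun i => V i (e (c j))) (a : Fin s → ℕ) :
    VdotN V a = ∑ k, (classSum c a k : ℤ) • fun i => V i (e k) := by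
  funext i
  simp only [VdotN, Matrix.mulVec, dotProduct, Finset.sum_apply, Pi.smul_apply, smul_eq_mul,
    classSum, Nat.cast_sum, Finset.sum_mul]
  rw [← Finset.sum_fiberwise Finset.univ c]
  refine Finset.sum_congr rfl fun k _ => Finset.sum_congr rfl fun j hj => ?_
  rw [congrFun (hc j) i, (Finset.mem_filter.mp hj).2, mul_comm]

theorem classSum_eq_of_VdotN_eq {d s t : ℕ} (V : Matrix (Fin d) (Fin s) ℤ) (e : Fin t → Fin s)
    (c : Fin s → Fin t) (hc : ∀ j, (fun i => V i j) = fun i => V i (e (c j)))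
    (hli : LinearIndependent ℤ (fun k : Fin t => fun i => V i (e k))) {a b : Fin s → ℕ}
    (h : VdotN V a = VdotN V b) : classSum c a = classSum c b := by
  rw [VdotN_eq_sum_classSum V e c hc, VdotN_eq_sum_classSum V e c hc] at h
  have := hli.fintypeLinearCombination_injective
    (a₁ := fun k => (classSum c a k : ℤ)) (a₂ := fun k => (classSum c b k : ℤ))
    (by simpa [Fintype.linearCombination_apply] using h)
  funext k
  exact_mod_cast congrFun this k

theorem VdotN_add {d s : ℕ} (V : Matrix (Fin d) (Fin s) ℤ) (a b : Fin s → ℕ) :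
    VdotN V (a + b) = VdotN V a + VdotN V b := by
  funext i
  simp [VdotN, Matrix.mulVec, dotProduct, mul_add, Finset.sum_add_distrib]

/-- Proposition: independent columns imply Noetherianity of `S^{(H)}`.
Let `V` be a `d×s` integer matrix and `H` a finitely generated subsemigroup of
`ℕV = {V·a : a ∈ ℕ^s}`. Suppose there are indices `i_1 < … < i_t` such that every column of
`V` equals one of the columns `v_{i_1},…,v_{i_t}` and these are linearly independent. Then
the semigroup `H̃ = {a ∈ ℕ^s : V·a ∈ H}` is finitely generated (equivalently, `S^{(H)}` is
Noetherian). -/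
theorem fiberSubmonoid_fg_of_linearIndependent_columns {d s : ℕ}
    (V : Matrix (Fin d) (Fin s) ℤ) (H : AddSubmonoid (Fin d → ℤ)) (hHfg : H.FG)
    (hHsub : ∀ x ∈ H, ∃ a : Fin s → ℕ, VdotN V a = x)
    (hcols : ∃ (t : ℕ) (e : Fin t → Fin s), StrictMono e ∧
      (∀ j : Fin s, ∃ k : Fin t, (fun i => V i j) = fun i => V i (e k)) ∧
      LinearIndependent ℤ (fun k : Fin t => fun i => V i (e k))) :
    (fiberSubmonoid V H).FG := by
  obtain ⟨t, e, -, hcol, hli⟩ := hcols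
  choose c hc using hcol
  obtain ⟨T, hT⟩ := hHfg
  have hTH : ∀ x ∈ T, x ∈ H := fun x hx => hT ▸ AddSubmonoid.subset_closure hx
  have hcs {a b : Fin s → ℕ} (h : VdotN V a = VdotN V b) : classSum c a = classSum c b :=
    classSum_eq_of_VdotN_eq V e c hc hli h
  have hfin : {b : Fin s → ℕ | VdotN V b ∈ T}.Finite := by
    refine Set.Finite.preimage' T.finite_toSet fun x hx => ?_
    obtain ⟨β, rfl⟩ := hHsub x (hTH x hx)
    refine (Set.finite_Iic (fun j => classSum c β (c j))).subset fun b hb j => ?_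
    exact (le_classSum c b j).trans_eq (congrFun (hcs hb) _)
  refine (AddSubmonoid.fg_iff _).mpr ⟨_, le_antisymm ?_ ?_, hfin⟩
  · exact AddSubmonoid.closure_le.mpr fun b hb => hTH _ hb
  · suffices key : ∀ x ∈ AddSubmonoid.closure (T : Set (Fin d → ℤ)), ∀ a, VdotN V a = x →
        a ∈ AddSubmonoid.closure {b : Fin s → ℕ | VdotN V b ∈ T} from
      fun a ha => key _ (hT.symm ▸ ha) a rfl
    intro x hx
    induction hx using AddSubmonoid.closure_induction_left with
    | zero =>
      intro a ha
      -- The fibre over `0` is trivial because the class sums bound the entries.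
      have h0 : classSum c a = classSum c 0 := hcs (ha.trans (by funext; simp [VdotN, Matrix.mulVec]))
      have : a = 0 := by
        funext j
        have := (le_classSum c a j).trans_eq (congrFun h0 _)
        simpa [classSum] using this
      exact this ▸ zero_mem _
    | add_left x hx y hy ih =>
      intro a ha
      obtain ⟨β, rfl⟩ := hHsub x (hTH x hx)
      obtain ⟨γ, rfl⟩ := hHsub y (hT ▸ hy)
      have hsum : classSum c a = classSum c β + classSum c γ := by
        rw [← classSum_add]
        exact hcs (ha.trans (VdotN_add V β γ).symm)
      obtain ⟨b, hba, hb⟩ := exists_le_classSum_eq c a (classSum c β)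
        (hsum ▸ fun k => Nat.le_add_right _ _)
      have hVb : VdotN V b = VdotN V β := by
        rw [VdotN_eq_sum_classSum V e c hc, VdotN_eq_sum_classSum V e c hc, hb]
      have hab : b + (a - b) = a := add_tsub_cancel_of_le hba
      rw [← hab]
      refine add_mem (AddSubmonoid.subset_closure ?_) (ih _ ?_)
      · rwa [Set.mem_ofPred_eq, hVb]
      · rw [← hab, VdotN_add, hVb] at ha
        exact add_left_cancel ha
end
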